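/- Assume 3 ≤ a ≤ b and t ≥ p, and let x* = ((2p−5) − √((2p−5)² − 24))/12. Let s be a block array such that f_{s,k} ≤ 2 for every treatment k and every treatment is connected in s, but s ∉ M, where M = Q₀ ∪ Q₁ ∪ Q₂ ∪ Q₃ ∪ Q₄. Then there exists a block array s* ∈ M with q_{s*}(x*) > q_s(x*). -/

import Mathlib

open Matrix

namespace TwoDim

/-- The set of plots of an `a × b` block. -/
abbrev Plot (a b : ℕ) := Fin a × Fin b

/-- A block array: an assignment of one of `t` treatments to each plot. -/
abbrev BlockArray (a b t : ℕ) := Plot a b → Fin t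

/-- The all-ones matrix. -/
def Jmat (n : Type*) : Matrix n n ℝ := Matrix.of fun _ _ => 1

/-- `B_m = I - J/m`. -/
noncomputable def Bmat (n : Type*) [Fintype n] [DecidableEq n] : Matrix n n ℝ :=
  1 - ((Fintype.card n : ℝ))⁻¹ • Jmat n

variable {a b t : ℕ}

/-- The treatment incidence matrix `T_s`. -/
def Tmat (s : BlockArray a b t) : Matrix (Plot a b) (Fin t) ℝ :=
  Matrix.of fun q k => if s q = k then 1 else 0

/-- Two plots are neighbors if they agree in one coordinate and differ by 1 in the other. -/
def Neighbor (q r : Plot a b) : Prop :=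
  (q.1 = r.1 ∧ (q.2.val + 1 = r.2.val ∨ r.2.val + 1 = q.2.val)) ∨
  (q.2 = r.2 ∧ (q.1.val + 1 = r.1.val ∨ r.1.val + 1 = q.1.val))

instance (q r : Plot a b) : Decidable (Neighbor q r) := by
  unfold Neighbor; infer_instance

/-- The adjacency matrix of the neighbor relation. -/
def Mmat (a b : ℕ) : Matrix (Plot a b) (Plot a b) ℝ :=
  Matrix.of fun q r => if Neighbor q r then 1 else 0

/-- `F_s = M T_s`. -/
def Fmat (s : BlockArray a b t) : Matrix (Plot a b) (Fin t) ℝ :=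
  Mmat a b * Tmat s

/-- `B̃ = Σ⁻¹ − Σ⁻¹ J Σ⁻¹ / (1'Σ⁻¹1)`. -/
noncomputable def Btilde (Sig : Matrix (Plot a b) (Plot a b) ℝ) :
    Matrix (Plot a b) (Plot a b) ℝ :=
  Sig⁻¹ - (∑ i, ∑ j, Sig⁻¹ i j)⁻¹ • (Sig⁻¹ * Jmat (Plot a b) * Sig⁻¹)

/-- `C_{s00} = T_s' W T_s` (with `W` playing the role of `B̃`). -/
def Cs00 (W : Matrix (Plot a b) (Plot a b) ℝ) (s : BlockArray a b t) :
    Matrix (Fin t) (Fin t) ℝ := (Tmat s)ᵀ * W * Tmat s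

/-- `C_{s01} = T_s' W F_s`. -/
def Cs01 (W : Matrix (Plot a b) (Plot a b) ℝ) (s : BlockArray a b t) :
    Matrix (Fin t) (Fin t) ℝ := (Tmat s)ᵀ * W * Fmat s

/-- `C_{s11} = F_s' W F_s`. -/
def Cs11 (W : Matrix (Plot a b) (Plot a b) ℝ) (s : BlockArray a b t) :
    Matrix (Fin t) (Fin t) ℝ := (Fmat s)ᵀ * W * Fmat s

/-- `c_{s00} = tr(B_t C_{s00})`. -/
noncomputable def cs00 (W : Matrix (Plot a b) (Plot a b) ℝ) (s : BlockArray a b t) : ℝ :=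
  Matrix.trace (Bmat (Fin t) * Cs00 W s)

noncomputable def cs01 (W : Matrix (Plot a b) (Plot a b) ℝ) (s : BlockArray a b t) : ℝ :=
  Matrix.trace (Bmat (Fin t) * Cs01 W s)

noncomputable def cs11 (W : Matrix (Plot a b) (Plot a b) ℝ) (s : BlockArray a b t) : ℝ :=
  Matrix.trace (Bmat (Fin t) * Cs11 W s)

/-- The quadratic `q_s(x) = c_{s00} + 2 c_{s01} x + c_{s11} x²`. -/
noncomputable def qpoly (W : Matrix (Plot a b) (Plot a b) ℝ) (s : BlockArray a b t) (x : ℝ) : ℝ :=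
  cs00 W s + 2 * cs01 W s * x + cs11 W s * x ^ 2

/-- A measure on the set of block arrays: nonnegative weights summing to one. -/
def IsMeasure (ξ : BlockArray a b t → ℝ) : Prop :=
  (∀ s, 0 ≤ ξ s) ∧ ∑ s, ξ s = 1

noncomputable def Cm00 (W : Matrix (Plot a b) (Plot a b) ℝ) (ξ : BlockArray a b t → ℝ) :
    Matrix (Fin t) (Fin t) ℝ := ∑ s, ξ s • Cs00 W s

noncomputable def Cm01 (W : Matrix (Plot a b) (Plot a b) ℝ) (ξ : BlockArray a b t → ℝ) :
    Matrix (Fin t) (Fin t) ℝ := ∑ s, ξ s • Cs01 W s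

noncomputable def Cm11 (W : Matrix (Plot a b) (Plot a b) ℝ) (ξ : BlockArray a b t → ℝ) :
    Matrix (Fin t) (Fin t) ℝ := ∑ s, ξ s • Cs11 W s

noncomputable def cm00 (W : Matrix (Plot a b) (Plot a b) ℝ) (ξ : BlockArray a b t → ℝ) : ℝ :=
  ∑ s, ξ s * cs00 W s

noncomputable def cm01 (W : Matrix (Plot a b) (Plot a b) ℝ) (ξ : BlockArray a b t → ℝ) : ℝ :=
  ∑ s, ξ s * cs01 W s

noncomputable def cm11 (W : Matrix (Plot a b) (Plot a b) ℝ) (ξ : BlockArray a b t → ℝ) : ℝ :=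
  ∑ s, ξ s * cs11 W s

/-- `q*_ξ = c_{ξ00} − c_{ξ01}²/c_{ξ11}`. -/
noncomputable def qstar (W : Matrix (Plot a b) (Plot a b) ℝ) (ξ : BlockArray a b t → ℝ) : ℝ :=
  cm00 W ξ - (cm01 W ξ) ^ 2 / cm11 W ξ

/-- `G` is a generalized inverse of `A`. -/
def IsGenInv (A G : Matrix (Fin t) (Fin t) ℝ) : Prop := A * G * A = A

/-- Information matrix `C_{ξ00} − C_{ξ01} G C_{ξ10}` computed with a generalized inverse `G`. -/
noncomputable def InfoMat (W : Matrix (Plot a b) (Plot a b) ℝ) (ξ : BlockArray a b t → ℝ)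
    (G : Matrix (Fin t) (Fin t) ℝ) : Matrix (Fin t) (Fin t) ℝ :=
  Cm00 W ξ - Cm01 W ξ * G * (Cm01 W ξ)ᵀ

/-- A criterion `Φ` on `t×t` real symmetric matrices: concave, Loewner-nondecreasing, and
invariant under simultaneous permutations of rows and columns. -/
def GoodPhi (t : ℕ) (Φ : Matrix (Fin t) (Fin t) ℝ → ℝ) : Prop :=
  (∀ A B : Matrix (Fin t) (Fin t) ℝ, A.IsSymm → B.IsSymm → ∀ α : ℝ, 0 ≤ α → α ≤ 1 →
      α * Φ A + (1 - α) * Φ B ≤ Φ (α • A + (1 - α) • B)) ∧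
  (∀ A B : Matrix (Fin t) (Fin t) ℝ, A.IsSymm → B.IsSymm → (B - A).PosSemidef → Φ A ≤ Φ B) ∧
  (∀ (σ : Equiv.Perm (Fin t)) (C : Matrix (Fin t) (Fin t) ℝ), Φ (C.submatrix σ σ) = Φ C)

/-- Universal optimality of a measure `ξ`. -/
def UnivOptimal (W : Matrix (Plot a b) (Plot a b) ℝ) (ξ : BlockArray a b t → ℝ) : Prop :=
  ∀ η : BlockArray a b t → ℝ, IsMeasure η →
    ∀ G H : Matrix (Fin t) (Fin t) ℝ, IsGenInv (Cm11 W ξ) G → IsGenInv (Cm11 W η) H →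
      ∀ Φ : Matrix (Fin t) (Fin t) ℝ → ℝ, GoodPhi t Φ →
        Φ (InfoMat W η H) ≤ Φ (InfoMat W ξ G)

/-- A measure is symmetric if it is invariant under relabeling of the treatments. -/
def IsSymmetricMeasure (ξ : BlockArray a b t → ℝ) : Prop :=
  ∀ (σ : Equiv.Perm (Fin t)) (s : BlockArray a b t), ξ (fun q => σ (s q)) = ξ s

/-- A matrix is completely symmetric if it is of the form `αI + βJ`. -/
def ComplSym (A : Matrix (Fin t) (Fin t) ℝ) : Prop :=
  ∃ α β : ℝ, A = α • (1 : Matrix (Fin t) (Fin t) ℝ) + β • Jmat (Fin t)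

/-- A measure is pseudo symmetric if `C_{ξ00}`, `C_{ξ01}`, `C_{ξ11}` are completely symmetric. -/
def PseudoSym (W : Matrix (Plot a b) (Plot a b) ℝ) (ξ : BlockArray a b t → ℝ) : Prop :=
  ComplSym (Cm00 W ξ) ∧ ComplSym (Cm01 W ξ) ∧ ComplSym (Cm11 W ξ)

/-- `r(x) = max_{s∈S} q_s(x)`. -/
noncomputable def rfun {a b : ℕ} (t : ℕ) (W : Matrix (Plot a b) (Plot a b) ℝ) (x : ℝ) : ℝ :=
  sSup (Set.range fun s : BlockArray a b t => qpoly W s x)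

/-- `min_{s∈S} q_s(x)`. -/
noncomputable def rmin {a b : ℕ} (t : ℕ) (W : Matrix (Plot a b) (Plot a b) ℝ) (x : ℝ) : ℝ :=
  sInf (Set.range fun s : BlockArray a b t => qpoly W s x)

/-- Number of plots assigned treatment `k` by `s`. -/
noncomputable def f0 (s : BlockArray a b t) (k : Fin t) : ℕ :=
  {q : Plot a b | s q = k}.ncard

/-- Replications of `k` among the columns `1,…,b−1`. -/
noncomputable def f1 (s : BlockArray a b t) (k : Fin t) : ℕ :=
  {q : Plot a b | s q = k ∧ q.2.val + 1 < b}.ncard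

/-- Replications of `k` among the columns `2,…,b`. -/
noncomputable def f2 (s : BlockArray a b t) (k : Fin t) : ℕ :=
  {q : Plot a b | s q = k ∧ 1 ≤ q.2.val}.ncard

/-- Replications of `k` among the rows `1,…,a−1`. -/
noncomputable def f3 (s : BlockArray a b t) (k : Fin t) : ℕ :=
  {q : Plot a b | s q = k ∧ q.1.val + 1 < a}.ncard

/-- Replications of `k` among the rows `2,…,a`. -/
noncomputable def f4 (s : BlockArray a b t) (k : Fin t) : ℕ :=
  {q : Plot a b | s q = k ∧ 1 ≤ q.1.val}.ncard

noncomputable def fc (s : BlockArray a b t) : ℕ → Fin t → ℕ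
  | 0 => f0 s
  | 1 => f1 s
  | 2 => f2 s
  | 3 => f3 s
  | 4 => f4 s
  | _ => fun _ => 0

/-- `h^{uv}_s = Σ_k f^u_{s,k} f^v_{s,k}`. -/
noncomputable def hval (s : BlockArray a b t) (u v : ℕ) : ℝ :=
  ∑ k : Fin t, (fc s u k : ℝ) * (fc s v k : ℝ)

noncomputable def h00 (s : BlockArray a b t) : ℝ := hval s 0 0

noncomputable def h1 (s : BlockArray a b t) : ℝ :=
  hval s 0 1 + hval s 0 2 + hval s 0 3 + hval s 0 4

noncomputable def h2 (s : BlockArray a b t) : ℝ :=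
  hval s 1 1 + hval s 2 2 + hval s 3 3 + hval s 4 4

noncomputable def h3 (s : BlockArray a b t) : ℝ :=
  hval s 1 2 + hval s 1 3 + hval s 1 4 + hval s 2 3 + hval s 2 4 + hval s 3 4

/-- `z¹_{s,r}`: horizontally adjacent pairs of plots receiving the same treatment. -/
noncomputable def zr1 (s : BlockArray a b t) : ℕ :=
  {qr : Plot a b × Plot a b |
    qr.1.1 = qr.2.1 ∧ qr.1.2.val + 1 = qr.2.2.val ∧ s qr.1 = s qr.2}.ncard

noncomputable def zr2 (s : BlockArray a b t) : ℕ :=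
  {qr : Plot a b × Plot a b |
    qr.1.1 = qr.2.1 ∧ qr.1.2.val + 2 = qr.2.2.val ∧ s qr.1 = s qr.2}.ncard

noncomputable def zc1 (s : BlockArray a b t) : ℕ :=
  {qr : Plot a b × Plot a b |
    qr.1.2 = qr.2.2 ∧ qr.1.1.val + 1 = qr.2.1.val ∧ s qr.1 = s qr.2}.ncard

noncomputable def zc2 (s : BlockArray a b t) : ℕ :=
  {qr : Plot a b × Plot a b |
    qr.1.2 = qr.2.2 ∧ qr.1.1.val + 2 = qr.2.1.val ∧ s qr.1 = s qr.2}.ncard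

/-- pairs `(i,j)`, `(i−1,j+1)` with the same treatment. -/
noncomputable def zd1 (s : BlockArray a b t) : ℕ :=
  {qr : Plot a b × Plot a b |
    qr.2.1.val + 1 = qr.1.1.val ∧ qr.1.2.val + 1 = qr.2.2.val ∧ s qr.1 = s qr.2}.ncard

/-- pairs `(i,j)`, `(i+1,j+1)` with the same treatment. -/
noncomputable def zd2 (s : BlockArray a b t) : ℕ :=
  {qr : Plot a b × Plot a b |
    qr.1.1.val + 1 = qr.2.1.val ∧ qr.1.2.val + 1 = qr.2.2.val ∧ s qr.1 = s qr.2}.ncard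

noncomputable def z1 (s : BlockArray a b t) : ℝ := 2 * zr1 s + 2 * zc1 s

noncomputable def z2 (s : BlockArray a b t) : ℝ :=
  2 * zr2 s + 2 * zc2 s + 4 * zd1 s + 4 * zd2 s

/-- `η = 4p − 2a − 2b − 2(8ab − 7a − 7b + 4)/t + 4(2p − a − b)²/(pt)` where `p = ab`. -/
noncomputable def eta (a b t : ℕ) : ℝ :=
  4 * ((a : ℝ) * b) - 2 * a - 2 * b - 2 * (8 * (a : ℝ) * b - 7 * a - 7 * b + 4) / t +
    4 * (2 * (a : ℝ) * b - a - b) ^ 2 / (((a : ℝ) * b) * t)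

/-- A corner plot of the `a × b` block. -/
def IsCorner (q : Plot a b) : Prop :=
  (q.1.val = 0 ∨ q.1.val + 1 = a) ∧ (q.2.val = 0 ∨ q.2.val + 1 = b)

/-- Treatment `k` is significant in `s`: it occupies exactly two plots, which are
neighbors, at least one of them being a corner plot. -/
def Significant (s : BlockArray a b t) (k : Fin t) : Prop :=
  ∃ u v : Plot a b, u ≠ v ∧ {q : Plot a b | s q = k} = {u, v} ∧
    Neighbor u v ∧ (IsCorner u ∨ IsCorner v)

/-- Treatment `k` is strictly significant in `s`: both of its two plots are corners. -/
def StrictSignificant (s : BlockArray a b t) (k : Fin t) : Prop :=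
  ∃ u v : Plot a b, u ≠ v ∧ {q : Plot a b | s q = k} = {u, v} ∧
    Neighbor u v ∧ IsCorner u ∧ IsCorner v

/-- `Q_i`: block arrays with exactly `i` significant treatments in which every other
treatment appears at most once. -/
def Qset (a b t : ℕ) (i : ℕ) : Set (BlockArray a b t) :=
  {s | {k : Fin t | Significant s k}.ncard = i ∧
       ∀ k : Fin t, ¬ Significant s k → f0 s k ≤ 1}

/-- `Q_j*`: members of `Q_j` whose significant treatments are all strictly significant. -/
def QsetStar (a b t : ℕ) (j : ℕ) : Set (BlockArray a b t) :=
  {s | s ∈ Qset a b t j ∧ ∀ k : Fin t, Significant s k → StrictSignificant s k}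

/-- Treatment `k` is connected in `s`. -/
def ConnectedIn (s : BlockArray a b t) (k : Fin t) : Prop :=
  ∀ q r : Plot a b, s q = k → s r = k →
    Relation.ReflTransGen (fun u v => Neighbor u v ∧ s u = k ∧ s v = k) q r

/-- degree of a plot -/
def dg (q : Plot a b) : ℕ :=
  ((if q.1.val + 1 < a then 1 else 0) + (if 0 < q.1.val then 1 else 0)) +
  ((if q.2.val + 1 < b then 1 else 0) + (if 0 < q.2.val then 1 else 0))

lemma path_sum (n : ℕ) (i : Fin n) :
    ∑ j : Fin n, (if (i.val + 1 = j.val ∨ j.val + 1 = i.val) then (1:ℝ) else 0) =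
      (((if i.val + 1 < n then 1 else 0) + (if 0 < i.val then 1 else 0) : ℕ) : ℝ) := by
  have h : ∀ j : Fin n, (if (i.val + 1 = j.val ∨ j.val + 1 = i.val) then (1:ℝ) else 0) =
      (if i.val + 1 = j.val then (1:ℝ) else 0) + (if j.val + 1 = i.val then (1:ℝ) else 0) := by
    intro j
    by_cases h1 : i.val + 1 = j.val
    · have h2 : ¬ (j.val + 1 = i.val) := by omega
      simp [h1, h2]
    · simp [h1]
  simp only [h, Finset.sum_add_distrib]
  push_cast
  congr 1
  · by_cases h1 : i.val + 1 < n
    · rw [if_pos h1, Finset.sum_eq_single (⟨i.val + 1, h1⟩ : Fin n)]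
      · simp
      · intro j _ hj
        rw [if_neg]
        intro h; apply hj; apply Fin.ext; simp [h]
      · simp
    · rw [if_neg h1]
      apply Finset.sum_eq_zero
      intro j _
      rw [if_neg]
      have := j.2
      omega
  · by_cases h1 : 0 < i.val
    · rw [if_pos h1, Finset.sum_eq_single (⟨i.val - 1, by omega⟩ : Fin n)]
      · rw [if_pos]; simp; omega
      · intro j _ hj
        rw [if_neg]
        intro h; apply hj; apply Fin.ext; simp; omega
      · simp
    · rw [if_neg h1]
      apply Finset.sum_eq_zero
      intro j _
      rw [if_neg]
      omega

lemma deg_sum (q : Plot a b) : ∑ r, Mmat a b q r = (dg q : ℝ) := by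
  have h : ∀ r : Plot a b, Mmat a b q r =
      (if q.1 = r.1 then (if (q.2.val + 1 = r.2.val ∨ r.2.val + 1 = q.2.val) then (1:ℝ) else 0) else 0)
      + (if q.2 = r.2 then (if (q.1.val + 1 = r.1.val ∨ r.1.val + 1 = q.1.val) then (1:ℝ) else 0) else 0) := by
    intro r
    simp only [Mmat, Matrix.of_apply, Neighbor]
    by_cases h1 : q.1 = r.1
    · have h3 : ¬ (q.1.val + 1 = r.1.val ∨ r.1.val + 1 = q.1.val) := by rw [h1]; omega
      simp [h1]
    · simp [h1]
      by_cases h2 : q.2 = r.2 <;> simp [h2]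
  simp only [h, Finset.sum_add_distrib, Fintype.sum_prod_type]
  simp only [dg]
  rw [Nat.cast_add, ← path_sum, ← path_sum, add_comm]
  congr 1
  · simp
  · rw [Finset.sum_comm]
    simp

lemma neighbor_symm {q r : Plot a b} (h : Neighbor q r) : Neighbor r q := by
  rcases h with ⟨h1, h2⟩ | ⟨h1, h2⟩
  · exact Or.inl ⟨h1.symm, h2.symm⟩
  · exact Or.inr ⟨h1.symm, h2.symm⟩

lemma M_symm : (Mmat a b)ᵀ = Mmat a b := by
  ext q r
  simp only [Matrix.transpose_apply, Mmat, Matrix.of_apply]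
  congr 1
  exact propext ⟨neighbor_symm, neighbor_symm⟩

lemma deg_sum' (q : Plot a b) : ∑ r, Mmat a b r q = (dg q : ℝ) := by
  rw [← deg_sum]
  apply Finset.sum_congr rfl
  intro r _
  exact congrFun (congrFun M_symm q) r

lemma B_symm (n : Type*) [Fintype n] [DecidableEq n] : (Bmat n)ᵀ = Bmat n := by
  ext q r
  simp [Bmat, Jmat, Matrix.one_apply, eq_comm]

lemma no_triangle {u v w : Plot a b} (h1 : Neighbor u v) (h2 : Neighbor u w) (h3 : Neighbor w v) :
    False := by
  simp only [Neighbor, Fin.ext_iff] at *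
  omega

lemma Msq_zero {u v : Plot a b} (h : Neighbor u v) : (Mmat a b * Mmat a b) u v = 0 := by
  rw [Matrix.mul_apply]
  apply Finset.sum_eq_zero
  intro w _
  simp only [Mmat, Matrix.of_apply]
  by_cases h1 : Neighbor u w
  · by_cases h2 : Neighbor w v
    · exact (no_triangle h h1 h2).elim
    · simp [h2]
  · simp [h1]

/-- The kernel matrix. -/
noncomputable def Kmat (a b : ℕ) (x : ℝ) : Matrix (Plot a b) (Plot a b) ℝ :=
  Bmat (Plot a b) + x • (Bmat (Plot a b) * Mmat a b + Mmat a b * Bmat (Plot a b)) +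
    x ^ 2 • (Mmat a b * Bmat (Plot a b) * Mmat a b)

/-- Same-treatment matrix, centred. -/
noncomputable def Smat (s : BlockArray a b t) : Matrix (Plot a b) (Plot a b) ℝ :=
  Tmat s * Bmat (Fin t) * (Tmat s)ᵀ

lemma Smat_apply (s : BlockArray a b t) (u v : Plot a b) :
    Smat s u v = (if s u = s v then 1 else 0) - (t:ℝ)⁻¹ := by
  simp [Smat, Matrix.mul_apply, Tmat, Bmat, Jmat, Matrix.one_apply]

lemma Smat_symm (s : BlockArray a b t) : (Smat s)ᵀ = Smat s := by
  simp [Smat, Matrix.transpose_mul, B_symm, Matrix.mul_assoc]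

lemma qpoly_eq (s : BlockArray a b t) (x : ℝ) :
    qpoly (Bmat (Plot a b)) s x = Matrix.trace (Kmat a b x * Smat s) := by
  have gen : ∀ X : Matrix (Plot a b) (Plot a b) ℝ,
      Matrix.trace (Bmat (Fin t) * ((Tmat s)ᵀ * (X * Tmat s))) = Matrix.trace (X * Smat s) := by
    intro X
    rw [← Matrix.mul_assoc, Matrix.trace_mul_comm, Smat]
    simp only [Matrix.mul_assoc]
  have h0 : cs00 (Bmat (Plot a b)) s = Matrix.trace (Bmat (Plot a b) * Smat s) := by
    rw [← gen]
    simp only [cs00, Cs00, Matrix.mul_assoc]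
  have h1 : cs01 (Bmat (Plot a b)) s =
      Matrix.trace (Bmat (Plot a b) * Mmat a b * Smat s) := by
    rw [← gen]
    simp only [cs01, Cs01, Fmat, Matrix.mul_assoc]
  have h1' : cs01 (Bmat (Plot a b)) s =
      Matrix.trace (Mmat a b * Bmat (Plot a b) * Smat s) := by
    rw [h1, ← Matrix.trace_transpose]
    simp only [Matrix.transpose_mul, Smat_symm, B_symm, M_symm]
    rw [Matrix.trace_mul_comm]
  have h2 : cs11 (Bmat (Plot a b)) s =
      Matrix.trace (Mmat a b * Bmat (Plot a b) * Mmat a b * Smat s) := by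
    rw [← gen]
    simp only [cs11, Cs11, Fmat, Matrix.transpose_mul, M_symm, Matrix.mul_assoc]
  simp only [qpoly, Kmat, Matrix.add_mul, Matrix.smul_mul, Matrix.trace_add, Matrix.trace_smul,
    smul_eq_mul]
  rw [← h0, ← h1, ← h1', ← h2]
  ring

lemma Kmat_apply (x : ℝ) {u v : Plot a b} (h : Neighbor u v) :
    Kmat a b x u v = 2 * x - ((a * b : ℕ) : ℝ)⁻¹ * ((1 + x * dg u) * (1 + x * dg v)) := by
  have hne : u ≠ v := by
    rintro rfl
    simp [Neighbor] at h
  have hJM : ∀ u v : Plot a b, (Jmat (Plot a b) * Mmat a b) u v = dg v := by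
    intro u v
    rw [← deg_sum']
    simp [Matrix.mul_apply, Jmat]
  have hMJ : ∀ u v : Plot a b, (Mmat a b * Jmat (Plot a b)) u v = dg u := by
    intro u v
    rw [← deg_sum]
    simp [Matrix.mul_apply, Jmat]
  have hMJM : (Mmat a b * Jmat (Plot a b) * Mmat a b) u v = dg u * dg v := by
    rw [Matrix.mul_apply]
    simp only [hMJ]
    rw [← Finset.mul_sum, deg_sum']
  have hM : Mmat a b u v = 1 := by simp [Mmat, h]
  have hsq := Msq_zero h
  simp only [Kmat, Bmat, Matrix.mul_sub, Matrix.sub_mul, Matrix.mul_smul, Matrix.smul_mul,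
    Matrix.add_apply, Matrix.sub_apply, Matrix.smul_apply, Matrix.mul_one, Matrix.one_mul,
    hJM, hMJ, hMJM, hM, hsq, smul_eq_mul, Matrix.one_apply_ne hne]
  simp [Jmat]
  ring

lemma dg_cases (ha : 3 ≤ a) (hb : 3 ≤ b) {u v : Plot a b} (h : Neighbor u v) :
    (3 ≤ dg u ∧ 3 ≤ dg v) ∨ ((IsCorner u ∨ IsCorner v) ∧
      ((dg u = 2 ∧ dg v = 3) ∨ (dg u = 3 ∧ dg v = 2))) := by
  have h1 := u.1.2
  have h2 := u.2.2
  have h3 := v.1.2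
  have h4 := v.2.2
  simp only [Neighbor, Fin.ext_iff, IsCorner, dg] at *
  split_ifs <;> omega

lemma sig_le (s : BlockArray a b t) : {k : Fin t | Significant s k}.ncard ≤ 4 := by
  have hc : {q : Plot a b | IsCorner q}.ncard ≤ 4 := by
    have : ((fun q : Plot a b => (q.1.val, q.2.val)) '' {q : Plot a b | IsCorner q}) ⊆
        (({(0, 0), (0, b - 1), (a - 1, 0), (a - 1, b - 1)} : Finset (ℕ × ℕ)) : Set (ℕ × ℕ)) := by
      rintro _ ⟨q, ⟨h1, h2⟩, rfl⟩
      have h3 : q.1.val = 0 ∨ q.1.val = a - 1 := by omega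
      have h4 : q.2.val = 0 ∨ q.2.val = b - 1 := by omega
      rcases h3 with h3 | h3 <;> rcases h4 with h4 | h4 <;> simp [h3, h4]
    have h5 := Set.ncard_le_ncard this (Finset.finite_toSet _)
    rw [Set.ncard_image_of_injective, Set.ncard_coe_finset] at h5
    · exact h5.trans Finset.card_le_four
    · rintro ⟨q1, q2⟩ ⟨r1, r2⟩ h
      simp at h
      ext <;> simp [h]
  have hsub : {k : Fin t | Significant s k} ⊆ s '' {q : Plot a b | IsCorner q} := by
    rintro k ⟨u, v, _, hset, _, hcor⟩
    have hu : u ∈ {q : Plot a b | s q = k} := by rw [hset]; simp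
    have hv : v ∈ {q : Plot a b | s q = k} := by rw [hset]; simp
    rcases hcor with h | h
    · exact ⟨u, h, hu⟩
    · exact ⟨v, h, hv⟩
  exact (Set.ncard_le_ncard hsub (Set.toFinite _)).trans
    ((Set.ncard_image_le (Set.toFinite _)).trans hc)

lemma pair_set (s : BlockArray a b t) (hf : ∀ k : Fin t, f0 s k ≤ 2) {u v : Plot a b}
    (hne : u ≠ v) (hs : s u = s v) : {q : Plot a b | s q = s u} = {u, v} := by
  symm
  apply Set.eq_of_subset_of_ncard_le _ _ (Set.toFinite _)
  · intro q hq
    rcases hq with rfl | rfl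
    · rfl
    · exact hs.symm
  · rw [Set.ncard_pair hne]
    exact hf (s u)

lemma pair_neighbor (s : BlockArray a b t) (hf : ∀ k : Fin t, f0 s k ≤ 2)
    (hconn : ∀ k : Fin t, ConnectedIn s k) {u v : Plot a b}
    (hne : u ≠ v) (hs : s u = s v) : Neighbor u v := by
  have hset := pair_set s hf hne hs
  rcases (hconn (s u) u v rfl hs.symm).cases_head with h | ⟨w, ⟨hw, _, hsw⟩, _⟩
  · exact (hne h).elim
  · have : w ∈ ({u, v} : Set (Plot a b)) := by rw [← hset]; exact hsw
    rcases this with rfl | rfl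
    · simp [Neighbor] at hw
    · exact hw

/-- Lemma `lemma 333`: for `t ≥ p` and `a ≥ 3`, any array with all
replications at most `2` and all treatments connected which is not in
`M = Q₀ ∪ Q₁ ∪ Q₂ ∪ Q₃ ∪ Q₄` is strictly beaten at `x*` by some array of `M`. -/
theorem connected_not_M_beaten
    (a b t : ℕ) (ha : 3 ≤ a) (hab : a ≤ b) (ht : a * b ≤ t)
    (xstar : ℝ)
    (hx : xstar = ((2 * ((a : ℝ) * b) - 5) -
        Real.sqrt ((2 * ((a : ℝ) * b) - 5) ^ 2 - 24)) / 12)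
    (s : BlockArray a b t)
    (hf : ∀ k : Fin t, f0 s k ≤ 2)
    (hconn : ∀ k : Fin t, ConnectedIn s k)
    (hnot : s ∉ Qset a b t 0 ∪ Qset a b t 1 ∪ Qset a b t 2 ∪ Qset a b t 3 ∪ Qset a b t 4) :
    ∃ sstar ∈ Qset a b t 0 ∪ Qset a b t 1 ∪ Qset a b t 2 ∪ Qset a b t 3 ∪ Qset a b t 4,
      qpoly (Bmat (Plot a b)) s xstar < qpoly (Bmat (Plot a b)) sstar xstar := by
  have hb : 3 ≤ b := ha.trans hab
  have hp9 : 9 ≤ a * b := by nlinarith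
  have hp9' : (9:ℝ) ≤ (a:ℝ) * b := by exact_mod_cast hp9
  set p : ℝ := (a:ℝ) * b with hp
  have hA : (0:ℝ) ≤ (2 * p - 5) ^ 2 - 24 := by nlinarith
  have hsq := Real.sq_sqrt hA
  have hs0 := Real.sqrt_nonneg ((2 * p - 5) ^ 2 - 24)
  have hroot : 6 * xstar ^ 2 - (2 * p - 5) * xstar + 1 = 0 := by
    rw [hx]; nlinarith
  have hpos : 0 < xstar := by
    rw [hx]
    have : Real.sqrt ((2 * p - 5) ^ 2 - 24) < 2 * p - 5 := by
      rw [Real.sqrt_lt' (by linarith)]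
      linarith
    linarith
  have hpp : (0:ℝ) < p := by linarith
  have hneg : ∀ u v : Plot a b, Neighbor u v → 3 ≤ dg u → 3 ≤ dg v →
      Kmat a b xstar u v < 0 := by
    intro u v h hu hv
    rw [Kmat_apply xstar h]
    push_cast
    rw [← hp]
    have hu' : (3:ℝ) ≤ dg u := by exact_mod_cast hu
    have hv' : (3:ℝ) ≤ dg v := by exact_mod_cast hv
    have h1 : (1 + xstar * 3) * (1 + xstar * 3) ≤ (1 + xstar * dg u) * (1 + xstar * dg v) := by
      gcongr
    have h2 : 2 * xstar = p⁻¹ * (2 * xstar * p) := by field_simp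
    rw [h2, ← mul_sub]
    apply mul_neg_of_pos_of_neg (by positivity)
    nlinarith
  have hle : ∀ u v : Plot a b, Neighbor u v → Kmat a b xstar u v ≤ 0 := by
    intro u v h
    rcases dg_cases ha hb h with ⟨h1, h2⟩ | ⟨_, h3⟩
    · exact (hneg u v h h1 h2).le
    · rw [Kmat_apply xstar h]
      push_cast
      rw [← hp]
      have h2 : 2 * xstar = p⁻¹ * (2 * xstar * p) := by field_simp
      rw [h2, ← mul_sub]
      apply le_of_eq
      rw [mul_eq_zero]
      right
      rcases h3 with ⟨h4, h5⟩ | ⟨h4, h5⟩ <;> rw [h4, h5] <;> push_cast <;> linarith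
  -- a binary array
  obtain ⟨e⟩ : Nonempty (Plot a b ↪ Fin t) := by
    apply Function.Embedding.nonempty_of_card_le
    simpa using ht
  have hnosig : ∀ k, ¬ Significant (e : Plot a b → Fin t) k := by
    rintro k ⟨u, v, hne, hset, _⟩
    have hu : u ∈ {q : Plot a b | e q = k} := by rw [hset]; simp
    have hv : v ∈ {q : Plot a b | e q = k} := by rw [hset]; simp
    exact hne (e.injective (hu.trans hv.symm))
  refine ⟨e, ?_, ?_⟩
  · refine Or.inl (Or.inl (Or.inl (Or.inl ⟨?_, ?_⟩)))
    · simp [hnosig]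
    · intro k _
      rw [f0, Set.ncard_le_one (Set.toFinite _)]
      intro x hx y hy
      exact e.injective (hx.trans hy.symm)
  -- a bad pair
  obtain ⟨k, hk, hk2⟩ : ∃ k, ¬ Significant s k ∧ 1 < f0 s k := by
    by_contra hcon
    push Not at hcon
    apply hnot
    have h4 := sig_le s
    have hm : s ∈ Qset a b t ({k : Fin t | Significant s k}.ncard) := ⟨rfl, hcon⟩
    generalize {k : Fin t | Significant s k}.ncard = n at h4 hm
    simp only [Set.mem_union]
    interval_cases n <;> tauto
  obtain ⟨u0, hu0, v0, hv0, hne0⟩ := (Set.one_lt_ncard (Set.toFinite _)).1 hk2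
  have hs00 : s u0 = s v0 := hu0.trans hv0.symm
  have hN0 := pair_neighbor s hf hconn hne0 hs00
  have hneg0 : Kmat a b xstar u0 v0 < 0 := by
    rcases dg_cases ha hb hN0 with ⟨h1, h2⟩ | ⟨hc, _⟩
    · exact hneg _ _ hN0 h1 h2
    · refine (hk ⟨u0, v0, hne0, ?_, hN0, hc⟩).elim
      rw [← pair_set s hf hne0 hs00]
      have : s u0 = k := hu0
      rw [this]
  rw [qpoly_eq, qpoly_eq]
  simp only [Matrix.trace, Matrix.diag_apply, Matrix.mul_apply]
  have hterm : ∀ u v : Plot a b, Kmat a b xstar u v * Smat s v u ≤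
      Kmat a b xstar u v * Smat (e : Plot a b → Fin t) v u := by
    intro u v
    rw [Smat_apply, Smat_apply]
    by_cases huv : u = v
    · simp [huv]
    · have hev : ¬ (e v = e u) := fun h => huv (e.injective h).symm
      rw [if_neg hev]
      by_cases hsv : s v = s u
      · rw [if_pos hsv]
        have := hle u v (pair_neighbor s hf hconn huv hsv.symm)
        linarith
      · rw [if_neg hsv]
  apply Finset.sum_lt_sum
  · intro u _
    exact Finset.sum_le_sum fun v _ => hterm u v
  · refine ⟨u0, Finset.mem_univ _, ?_⟩
    apply Finset.sum_lt_sum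
    · intro v _
      exact hterm u0 v
    · refine ⟨v0, Finset.mem_univ _, ?_⟩
      have hev : ¬ (e v0 = e u0) := fun h => hne0 (e.injective h).symm
      rw [Smat_apply, Smat_apply, if_pos hs00.symm, if_neg hev]
      linarith

end TwoDim
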